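/- Let Γ be a finite simple graph and let W = W(Γ) be the associated right-angled Coxeter group. Let N be a finitely generated full normal subgroup of W. Then W/N is both abelian-by-finite and finite-by-abelian. -/

import Mathlib

/-- The defining relators of a right-angled Coxeter group: squares of the generators and
commutators of generators corresponding to adjacent vertices. -/
def racgRels {V : Type} (Γ : SimpleGraph V) : Set (FreeGroup V) :=
  { r | (∃ v : V, r = FreeGroup.of v * FreeGroup.of v) ∨
      ∃ v w : V, Γ.Adj v w ∧
        r = FreeGroup.of v * FreeGroup.of w * (FreeGroup.of v)⁻¹ * (FreeGroup.of w)⁻¹ }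

/-- The right-angled Coxeter group associated to the simple graph `Γ`. -/
abbrev RACG {V : Type} (Γ : SimpleGraph V) : Type := PresentedGroup (racgRels Γ)

/-- The subgroup `W(Δ)` of the RACG generated by the vertices in the set `S`. -/
def racgVertexSubgroup {V : Type} (Γ : SimpleGraph V) (S : Set V) : Subgroup (RACG Γ) :=
  Subgroup.closure { x | ∃ v ∈ S, x = PresentedGroup.of (rels := racgRels Γ) v }

/-- A set of vertices `S` is a join of two (nonempty) subgraphs if it can be split into
two nonempty pieces every two vertices of which (one from each piece) are adjacent. -/
def IsJoinOfTwo {V : Type} (Γ : SimpleGraph V) (S : Set V) : Prop :=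
  ∃ A B : Set V, A.Nonempty ∧ B.Nonempty ∧ Disjoint A B ∧ A ∪ B = S ∧
    ∀ a ∈ A, ∀ b ∈ B, Γ.Adj a b

/-- `P : Fin k → Set V` is a join decomposition of `Γ` into join-indecomposable pieces. -/
def IsJoinDecomposition {V : Type} (Γ : SimpleGraph V) {k : ℕ} (P : Fin k → Set V) : Prop :=
  (∀ i, (P i).Nonempty) ∧ (∀ v : V, ∃! i, v ∈ P i) ∧
    (∀ i j, i ≠ j → ∀ a ∈ P i, ∀ b ∈ P j, Γ.Adj a b) ∧
    (∀ i, ¬ IsJoinOfTwo Γ (P i))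

/-- A subgroup `N` of the RACG is full if for a join decomposition of `Γ` into
join-indecomposable pieces `Γ_1, …, Γ_k`, `N` intersects each `W(Γ_i)` nontrivially. -/
def IsFullSubgroup {V : Type} (Γ : SimpleGraph V) (N : Subgroup (RACG Γ)) : Prop :=
  ∀ (k : ℕ) (P : Fin k → Set V), IsJoinDecomposition Γ P →
    ∀ i, N ⊓ racgVertexSubgroup Γ (P i) ≠ ⊥

/-- A group is abelian-by-finite if it has an abelian normal subgroup of finite index. -/
def AbelianByFinite (Q : Type) [Group Q] : Prop :=
  ∃ A : Subgroup Q, A.Normal ∧ A.FiniteIndex ∧ ∀ x y : A, x * y = y * x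

/-- A group is finite-by-abelian if it has a finite normal subgroup with abelian quotient,
equivalently a finite normal subgroup containing all commutators. -/
def FiniteByAbelian (Q : Type) [Group Q] : Prop :=
  ∃ F : Subgroup Q, F.Normal ∧ Finite F ∧ ∀ x y : Q, x * y * x⁻¹ * y⁻¹ ∈ F

section Helpers

open Classical

/-- The generator of the RACG attached to a vertex. -/
def gen {V : Type} (Γ : SimpleGraph V) (v : V) : RACG Γ :=
  PresentedGroup.of (rels := racgRels Γ) v

/-- The star of a vertex. -/
def starSet {V : Type} (Γ : SimpleGraph V) (v : V) : Set V := {t | t = v ∨ Γ.Adj v t}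

/-- The subgroup generated by the star of a vertex. -/
abbrev starSub {V : Type} (Γ : SimpleGraph V) (v : V) : Subgroup (RACG Γ) :=
  racgVertexSubgroup Γ (starSet Γ v)

/-- The base coset. -/
abbrev base {V : Type} (Γ : SimpleGraph V) (v : V) : RACG Γ ⧸ starSub Γ v :=
  ((1 : RACG Γ) : RACG Γ ⧸ starSub Γ v)

variable {V : Type} (Γ : SimpleGraph V)

theorem gen_mul_self (v : V) : gen Γ v * gen Γ v = 1 := by
  have := PresentedGroup.one_of_mem (rels := racgRels Γ)
    (x := FreeGroup.of v * FreeGroup.of v) (Or.inl ⟨v, rfl⟩)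
  rw [map_mul] at this
  exact this

theorem gen_inv (v : V) : (gen Γ v)⁻¹ = gen Γ v :=
  inv_eq_of_mul_eq_one_left (gen_mul_self Γ v)

theorem gen_comm {v w : V} (h : Γ.Adj v w) : gen Γ v * gen Γ w = gen Γ w * gen Γ v := by
  have := PresentedGroup.one_of_mem (rels := racgRels Γ)
    (x := FreeGroup.of v * FreeGroup.of w * (FreeGroup.of v)⁻¹ * (FreeGroup.of w)⁻¹)
    (Or.inr ⟨v, w, h, rfl⟩)
  have h2 : gen Γ v * gen Γ w * (gen Γ v)⁻¹ * (gen Γ w)⁻¹ = 1 := by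
    rw [map_mul, map_mul, map_mul, map_inv, map_inv] at this
    exact this
  have h3 := mul_inv_eq_one.mp h2
  exact mul_inv_eq_iff_eq_mul.mp h3

theorem gen_mem {S : Set V} {v : V} (h : v ∈ S) : gen Γ v ∈ racgVertexSubgroup Γ S :=
  Subgroup.subset_closure ⟨v, h, rfl⟩

theorem gen_mem_star (v : V) : gen Γ v ∈ starSub Γ v := gen_mem Γ (Or.inl rfl)

theorem star_comm {v : V} {h : RACG Γ} (hh : h ∈ starSub Γ v) :
    h * gen Γ v = gen Γ v * h := by
  have : starSub Γ v ≤ Subgroup.centralizer {gen Γ v} := by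
    refine (Subgroup.closure_le _).2 ?_
    rintro x ⟨t, ht, rfl⟩
    rw [SetLike.mem_coe, Subgroup.mem_centralizer_singleton_iff]
    rcases ht with rfl | ht
    · rfl
    · exact (gen_comm Γ ht).symm
  exact Subgroup.mem_centralizer_singleton_iff.1 (this hh)

theorem smul_eq_base {v : V} {h : RACG Γ} (hh : h ∈ starSub Γ v) (e : RACG Γ ⧸ starSub Γ v) :
    h • e = base Γ v ↔ e = base Γ v := by
  have key : h • base Γ v = base Γ v := by
    change ((h * 1 : RACG Γ) : RACG Γ ⧸ starSub Γ v) = _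
    rw [mul_one]
    exact QuotientGroup.eq.2 (by simpa using hh)
  constructor
  · intro h1
    rw [← key] at h1
    exact smul_left_cancel _ h1
  · rintro rfl
    exact key

theorem smul_gen_gen (s : V) {α : Type} [MulAction (RACG Γ) α] (e : α) :
    gen Γ s • gen Γ s • e = e := by
  rw [smul_smul, gen_mul_self, one_smul]

/-- Generators act on oriented walls. -/
noncomputable def sg (v s : V) : Equiv.Perm ((RACG Γ ⧸ starSub Γ v) × ZMod 2) :=
  Function.Involutive.toPerm
    (fun p => (gen Γ s • p.1, p.2 + if s = v ∧ p.1 = base Γ v then 1 else 0)) (by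
      rintro ⟨e, a⟩
      ext1
      · exact smul_gen_gen Γ s e
      · by_cases hs : s = v
        · subst hs
          simp only [smul_eq_base Γ (gen_mem_star Γ s), add_assoc]
          rw [CharTwo.add_self_eq_zero, add_zero]
        · simp [hs])

theorem sg_apply (v s : V) (p : (RACG Γ ⧸ starSub Γ v) × ZMod 2) :
    sg Γ v s p = (gen Γ s • p.1, p.2 + if s = v ∧ p.1 = base Γ v then 1 else 0) := rfl

theorem sg_mul_self (v s : V) : sg Γ v s * sg Γ v s = 1 := by
  ext1 p
  exact Function.Involutive.toPerm_involutive (f := _) _ p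

theorem sg_comm (v : V) {s t : V} (h : Γ.Adj s t) :
    sg Γ v s * sg Γ v t = sg Γ v t * sg Γ v s := by
  ext1 ⟨e, a⟩
  simp only [Equiv.Perm.mul_apply, sg_apply]
  ext1
  · simp only [smul_smul, gen_comm Γ h]
  · simp only
    by_cases hs : s = v
    · subst hs
      have ht : t ≠ s := h.ne'
      have : gen Γ t ∈ starSub Γ s := gen_mem Γ (Or.inr h)
      simp [ht, smul_eq_base Γ this]
    · by_cases ht : t = v
      · subst ht
        have : gen Γ s ∈ starSub Γ t := gen_mem Γ (Or.inr h.symm)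
        simp [hs, smul_eq_base Γ this]
      · simp [hs, ht]

/-- The action on oriented walls. -/
noncomputable def rho (v : V) :
    RACG Γ →* Equiv.Perm ((RACG Γ ⧸ starSub Γ v) × ZMod 2) :=
  PresentedGroup.toGroup (f := sg Γ v) (by
    rintro r (⟨s, rfl⟩ | ⟨s, t, h, rfl⟩)
    · simpa using sg_mul_self Γ v s
    · simp only [map_mul, map_inv, FreeGroup.lift_apply_of]
      rw [sg_comm Γ v h]
      group)

theorem rho_gen (v s : V) : rho Γ v (gen Γ s) = sg Γ v s := PresentedGroup.toGroup.of _

theorem racg_induction {C : RACG Γ → Prop} (one : C 1)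
    (step : ∀ x s, C x → C (x * gen Γ s)) (x : RACG Γ) : C x := by
  have hx : x ∈ Subgroup.closure (Set.range (PresentedGroup.of (rels := racgRels Γ))) := by
    rw [PresentedGroup.closure_range_of]; trivial
  induction hx using Subgroup.closure_induction_right with
  | one => exact one
  | mul_right x hx y hy h =>
    obtain ⟨s, rfl⟩ := hy
    exact step _ _ h
  | mul_inv_cancel x hx y hy h =>
    obtain ⟨s, rfl⟩ := hy
    have := step _ s h
    rwa [← gen_inv] at this

theorem rho_apply (v : V) (x : RACG Γ) (e : RACG Γ ⧸ starSub Γ v) (a : ZMod 2) :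
    rho Γ v x (e, a) = (x • e, a + (rho Γ v x (e, 0)).2) := by
  induction x using racg_induction Γ generalizing e a with
  | one => simp
  | step x s ih =>
    simp only [map_mul, Equiv.Perm.mul_apply, rho_gen, sg_apply]
    rw [ih, ih (gen Γ s • e) (0 + _)]
    simp only [mul_smul, zero_add, add_assoc]

/-- `wf e x` records on which side of the wall `e` the element `x` lies. -/
noncomputable def wf (v : V) (e : RACG Γ ⧸ starSub Γ v) (x : RACG Γ) : ZMod 2 :=
  (rho Γ v x⁻¹ (e, 0)).2

theorem wf_mul (v : V) (e : RACG Γ ⧸ starSub Γ v) (x y : RACG Γ) :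
    wf Γ v e (x * y) = wf Γ v e x + wf Γ v (x⁻¹ • e) y := by
  unfold wf
  rw [mul_inv_rev, map_mul, Equiv.Perm.mul_apply, rho_apply Γ v x⁻¹, rho_apply Γ v y⁻¹, zero_add]

theorem wf_gen (v s : V) (e : RACG Γ ⧸ starSub Γ v) :
    wf Γ v e (gen Γ s) = if s = v ∧ e = base Γ v then 1 else 0 := by
  unfold wf
  rw [gen_inv, rho_gen, sg_apply]
  simp

theorem wf_one (v : V) (e : RACG Γ ⧸ starSub Γ v) : wf Γ v e 1 = 0 := by
  simp [wf]

theorem wf_inv (v : V) (e : RACG Γ ⧸ starSub Γ v) (x : RACG Γ) :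
    wf Γ v e x⁻¹ = wf Γ v (x • e) x := by
  have := wf_mul Γ v e x⁻¹ x
  rw [inv_mul_cancel, wf_one, inv_inv] at this
  exact (CharTwo.add_eq_zero.1 this.symm)

theorem wf_finite (v : V) (x : RACG Γ) : {e | wf Γ v e x ≠ 0}.Finite := by
  induction x using racg_induction Γ with
  | one => simp [wf_one]
  | step x s ih =>
    refine (ih.union (Set.finite_singleton (x • base Γ v))).subset ?_
    intro e he
    by_contra hc
    simp only [Set.mem_union, Set.mem_ofPred_eq, Set.mem_singleton_iff, not_or, not_not] at hc
    apply he
    rw [wf_mul, hc.1, wf_gen, if_neg, zero_add]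
    rintro ⟨-, h⟩
    exact hc.2 (inv_smul_eq_iff.1 h)

/-- Elements of a parabolic subgroup cross only walls of types in it. -/
theorem wf_of_not_mem {S : Set V} {v : V} (hv : v ∉ S) {x : RACG Γ}
    (hx : x ∈ racgVertexSubgroup Γ S) (e : RACG Γ ⧸ starSub Γ v) : wf Γ v e x = 0 := by
  induction hx using Subgroup.closure_induction generalizing e with
  | mem x hx =>
    obtain ⟨t, ht, rfl⟩ := hx
    change wf Γ v e (gen Γ t) = 0
    rw [wf_gen, if_neg]
    rintro ⟨rfl, -⟩
    exact hv ht
  | one => exact wf_one Γ v e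
  | mul x y _ _ hx hy => rw [wf_mul, hx, hy, add_zero]
  | inv x _ hx => rw [wf_inv, hx]

theorem wf_star {v : V} {x : RACG Γ} (hx : x ∈ starSub Γ v) (e : RACG Γ ⧸ starSub Γ v)
    (he : e ≠ base Γ v) : wf Γ v e x = 0 := by
  induction hx using Subgroup.closure_induction generalizing e with
  | mem x hx =>
    obtain ⟨t, ht, rfl⟩ := hx
    change wf Γ v e (gen Γ t) = 0
    rw [wf_gen, if_neg]
    rintro ⟨-, h⟩
    exact he h
  | one => exact wf_one Γ v e
  | mul x y hx' _ hx hy =>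
    rw [wf_mul, hx e he, hy, add_zero]
    rwa [Ne, smul_eq_base Γ (inv_mem hx')]
  | inv x hx' hx =>
    rw [wf_inv, hx]
    rwa [Ne, smul_eq_base Γ hx']

theorem wf_same {v : V} {e : RACG Γ ⧸ starSub Γ v} {y z : RACG Γ}
    (hyz : y • base Γ v = z • base Γ v) (he : e ≠ y • base Γ v) :
    wf Γ v e y = wf Γ v e z := by
  have hm : y⁻¹ * z ∈ starSub Γ v := by
    apply QuotientGroup.eq.1
    have : ∀ w : RACG Γ, w • base Γ v = (w : RACG Γ ⧸ starSub Γ v) := by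
      intro w
      change ((w * 1 : RACG Γ) : RACG Γ ⧸ starSub Γ v) = _
      rw [mul_one]
    rwa [this, this] at hyz
  have h := wf_mul Γ v e y (y⁻¹ * z)
  rw [mul_inv_cancel_left, wf_star Γ hm, add_zero] at h
  · exact h.symm
  · intro h
    exact he (inv_smul_eq_iff.1 h)

theorem smul_base (v : V) (w : RACG Γ) : w • base Γ v = (w : RACG Γ ⧸ starSub Γ v) := by
  change ((w * 1 : RACG Γ) : RACG Γ ⧸ starSub Γ v) = _
  rw [mul_one]

theorem smul_base_iff {v : V} {y z : RACG Γ} :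
    y • base Γ v = z • base Γ v ↔ y⁻¹ * z ∈ starSub Γ v := by
  rw [smul_base, smul_base, QuotientGroup.eq]

/-- The reflection in a wall. -/
theorem exists_refl {v : V} (e : RACG Γ ⧸ starSub Γ v) :
    ∃ r : RACG Γ, (∀ x, wf Γ v e (r * x) = wf Γ v e x + 1) ∧ r * r = 1 ∧
      ∀ x, x • base Γ v = e → r * x = x * gen Γ v := by
  obtain ⟨u, rfl⟩ : ∃ u : RACG Γ, u • base Γ v = e := by
    obtain ⟨u, hu⟩ := QuotientGroup.mk_surjective e
    exact ⟨u, by rw [smul_base, ← hu]⟩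
  have hb := (smul_eq_base Γ (gen_mem_star Γ v) (base Γ v)).2 rfl
  refine ⟨u * gen Γ v * u⁻¹, ?_, ?_, ?_⟩
  · intro x
    have h1 : (u * gen Γ v * u⁻¹)⁻¹ • u • base Γ v = u • base Γ v := by
      rw [smul_smul]
      simp only [mul_inv_rev, inv_inv, gen_inv]
      rw [← mul_assoc, inv_mul_cancel_right, mul_smul, hb]
    rw [wf_mul, h1, add_comm]
    congr 1
    rw [wf_mul, wf_mul, inv_smul_smul, wf_gen, if_pos ⟨rfl, rfl⟩, wf_inv]
    have : u • (u * gen Γ v)⁻¹ • u • base Γ v = u • base Γ v := by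
      rw [smul_smul, smul_smul]
      simp only [mul_inv_rev, gen_inv]
      rw [← mul_assoc, inv_mul_cancel_right, mul_smul, hb]
    rw [this, add_right_comm, CharTwo.add_self_eq_zero, zero_add]
  · have := gen_mul_self Γ v
    calc _ = u * (gen Γ v * gen Γ v) * u⁻¹ := by group
      _ = 1 := by rw [this]; group
  · intro x hx
    have := star_comm Γ (smul_base_iff Γ |>.1 hx.symm)
    calc _ = u * (gen Γ v * (u⁻¹ * x)) := by group
      _ = x * gen Γ v := by rw [← this]; group

theorem zmod2_ne {a b c : ZMod 2} (h : a ≠ b) (h' : c ≠ b) : a = c := by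
  revert a b c; decide

/-- A wall does not separate points on a side of another wall that it does not lie on. -/
theorem wf_nested {v : V} {e e' : RACG Γ ⧸ starSub Γ v} (hne : e ≠ e') (z : RACG Γ)
    (hz : z • base Γ v = e') (a b : RACG Γ) (hab : wf Γ v e a = wf Γ v e b)
    (haz : wf Γ v e a ≠ wf Γ v e z) : wf Γ v e' a = wf Γ v e' b := by
  obtain ⟨r, hr, hrr, hrv⟩ := exists_refl Γ e
  set α := wf Γ v e a with hα
  let π : RACG Γ → RACG Γ := fun x => if wf Γ v e x = α then x else r * x
  have hπ : ∀ x, wf Γ v e (π x) = α := by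
    intro x
    by_cases h : wf Γ v e x = α
    · simp [π, h]
    · simp only [π, h, if_false, hr]
      generalize wf Γ v e x = p at h
      clear_value α
      clear hα hz haz hab
      revert p α; decide
  have hstep : ∀ x s, wf Γ v e' (π (x * gen Γ s)) = wf Γ v e' (π x) := by
    intro x s
    by_cases hs : s = v ∧ x • base Γ v = e
    · obtain ⟨rfl, hx⟩ := hs
      have h1 := hrv x hx
      have h2 : π (x * gen Γ s) = π x := by
        rw [← h1]
        have h3 := hr x
        by_cases h : wf Γ s e x = α
        · have : wf Γ s e (r * x) ≠ α := by rw [h3, h]; simp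
          simp only [π, this, h, if_false, if_true]
          rw [← mul_assoc, hrr, one_mul]
        · have : wf Γ s e (r * x) = α := by
            have := hπ x
            simpa only [π, h, if_false] using this
          simp only [π, this, h, if_false, if_true]
      rw [h2]
    · have h1 : wf Γ v e (x * gen Γ s) = wf Γ v e x := by
        rw [wf_mul, wf_gen, if_neg, add_zero]
        rintro ⟨h1, h2⟩
        exact hs ⟨h1, (inv_smul_eq_iff.1 h2).symm⟩
      have h2 : π (x * gen Γ s) = π x * gen Γ s := by
        by_cases h : wf Γ v e x = α
        · simp only [π, h1, h, if_true]
        · simp only [π, h1, h, if_false, mul_assoc]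
      rw [h2, wf_mul, wf_gen, if_neg, add_zero]
      rintro ⟨-, h3⟩
      have h4 : e' = π x • base Γ v := inv_smul_eq_iff.1 h3
      apply haz
      rw [← hπ x]
      exact wf_same Γ (by rw [hz, h4]) (by rw [← h4]; exact hne)
  have hconst : ∀ x, wf Γ v e' (π x) = wf Γ v e' (π 1) := by
    intro x
    induction x using racg_induction Γ with
    | one => rfl
    | step x s ih => rw [hstep, ih]
  have h1 := (hconst a).trans (hconst b).symm
  simpa only [π, ← hab, ← hα, if_true] using h1

/-- A normal subgroup that does not cross a wall stabilizes it. -/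
theorem fixes_of_not_cross {v : V} (N : Subgroup (RACG Γ)) [N.Normal]
    (e : RACG Γ ⧸ starSub Γ v) (he : ∀ n ∈ N, wf Γ v e n = 0) :
    ∀ n ∈ N, n • e = e := by
  obtain ⟨r, hr, hrr, hrv⟩ := exists_refl Γ e
  obtain ⟨u, hu⟩ : ∃ u : RACG Γ, u • base Γ v = e := by
    obtain ⟨u, hu⟩ := QuotientGroup.mk_surjective e
    exact ⟨u, by rw [smul_base, ← hu]⟩
  -- translating walls by `N`
  have htr : ∀ n ∈ N, ∀ x, wf Γ v (n • e) x = wf Γ v e (n⁻¹ * x) := by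
    intro n hn x
    rw [wf_mul, inv_inv, he _ (inv_mem hn), zero_add]
  have h1 : ∀ n ∈ N, wf Γ v (n • e) 1 = 0 := fun n _ => wf_one _ _ _
  have h2 : ∀ n ∈ N, wf Γ v (n • e) r = 1 := by
    intro n hn
    rw [htr n hn]
    have : n⁻¹ * r = r * (r⁻¹ * n⁻¹ * r) := by group
    rw [this, hr, he, zero_add]
    have := Subgroup.Normal.conj_mem ‹N.Normal› n⁻¹ (inv_mem hn) r⁻¹
    rwa [inv_inv] at this
  -- halfspaces are comparable
  have hcomp : ∀ n ∈ N, n • e ≠ e →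
      (∀ x, wf Γ v e x = 1 → wf Γ v e (n⁻¹ * x) = 1) ∨
      (∀ x, wf Γ v e x = 1 → wf Γ v e (n * x) = 1) := by
    intro n hn hne
    have hz : (n * u) • base Γ v = n • e := by rw [mul_smul, hu]
    have hr1 : wf Γ v e r = 1 := by simpa using h2 1 (one_mem _)
    have h01 : ∀ a : ZMod 2, a = 0 ∨ a = 1 := by decide
    rcases h01 (wf Γ v e (n * u)) with h0 | h0
    · left
      intro x hx
      rw [← htr n hn, ← h2 n hn]
      refine wf_nested Γ hne.symm _ hz _ _ (hx.trans hr1.symm) ?_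
      rw [hx, h0]; decide
    · right
      intro x hx
      by_contra hc
      have hc0 : wf Γ v e (n * x) = 0 := (h01 _).resolve_right hc
      have := wf_nested Γ hne.symm _ hz (n * x) 1 (by rw [hc0, wf_one])
        (by rw [hc0, h0]; decide)
      rw [wf_one, htr n hn, inv_mul_cancel_left, hx] at this
      exact absurd this (by decide)
  -- orbits are finite
  have hfin : ∀ n ∈ N, ∃ k : ℕ, n ^ (k + 1) • e = e := by
    intro n hn
    have hS := wf_finite Γ v r
    have hmaps : ∀ i : ℕ, n ^ i • e ∈ {e | wf Γ v e r ≠ 0} := by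
      intro i
      have := h2 (n ^ i) (pow_mem hn i)
      change wf Γ v (n ^ i • e) r ≠ 0
      rw [this]; decide
    obtain ⟨i, j, hij, hEq⟩ := Set.Finite.exists_lt_map_eq_of_forall_mem hmaps hS
    refine ⟨j - i - 1, ?_⟩
    have hj : j = i + (j - i - 1 + 1) := by omega
    rw [hj, pow_add, mul_smul] at hEq
    exact (smul_left_cancel _ hEq).symm
  -- expanding is impossible
  have hmain : ∀ n ∈ N, (∀ x, wf Γ v e x = 1 → wf Γ v e (n⁻¹ * x) = 1) → n • e = e := by
    intro n hn hexp
    by_contra hne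
    obtain ⟨k, hk⟩ := hfin n hn
    have hiter : ∀ (m : ℕ) x, wf Γ v e x = 1 → wf Γ v e ((n ^ m)⁻¹ * x) = 1 := by
      intro m
      induction m with
      | zero => intro x hx; simpa using hx
      | succ m ih =>
        intro x hx
        have := hexp _ (ih x hx)
        rwa [← mul_assoc, ← mul_inv_rev, ← pow_succ] at this
    have heq : ∀ x, wf Γ v (n • e) x = 1 ↔ wf Γ v e x = 1 := by
      intro x
      rw [htr n hn]
      refine ⟨fun h => ?_, hexp x⟩
      have h3 := hiter k _ h
      rw [← mul_assoc, ← mul_inv_rev, ← pow_succ', ← htr _ (pow_mem hn _), hk] at h3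
      exact h3
    have h3 : wf Γ v (n • e) (u * gen Γ v) = wf Γ v (n • e) u := by
      rw [wf_mul, wf_gen, if_neg, add_zero]
      rintro ⟨-, h⟩
      exact hne ((inv_smul_eq_iff.1 h).trans hu)
    have h4 : wf Γ v e (u * gen Γ v) = wf Γ v e u + 1 := by
      rw [← hrv u hu, hr]
    have h5 := heq u
    have h6 := heq (u * gen Γ v)
    rw [h3, h5, h4] at h6
    generalize wf Γ v e u = p at h6
    revert p; decide
  intro n hn
  by_contra hne
  rcases hcomp n hn hne with h | h
  · exact hne (hmain n hn h)
  · have := hmain n⁻¹ (inv_mem hn) (by simpa using h)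
    exact hne (inv_smul_eq_iff.1 this).symm

/-- Finite generation: either finitely many orbits of walls, or some wall is not crossed. -/
theorem fg_dichotomy (v : V) (N : Subgroup (RACG Γ)) (hfg : N.FG) :
    (∃ F : Set (RACG Γ ⧸ starSub Γ v), F.Finite ∧ ∀ e, ∃ n ∈ N, n • e ∈ F) ∨
    ∃ e : RACG Γ ⧸ starSub Γ v, ∀ n ∈ N, wf Γ v e n = 0 := by
  obtain ⟨T, rfl⟩ := hfg
  by_cases h : ∀ e : RACG Γ ⧸ starSub Γ v, ∃ n ∈ Subgroup.closure (T : Set (RACG Γ)),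
      n • e ∈ ⋃ t ∈ T, {e | wf Γ v e t ≠ 0}
  · left
    exact ⟨_, Set.Finite.biUnion T.finite_toSet (fun t _ => wf_finite Γ v t), h⟩
  · right
    push Not at h
    obtain ⟨e, he⟩ := h
    refine ⟨e, ?_⟩
    have he' : ∀ m ∈ Subgroup.closure (T : Set (RACG Γ)), ∀ t ∈ T, wf Γ v (m • e) t = 0 := by
      intro m hm t ht
      by_contra hc
      exact he m hm (Set.mem_biUnion ht hc)
    have key : ∀ n ∈ Subgroup.closure (T : Set (RACG Γ)),
        ∀ m ∈ Subgroup.closure (T : Set (RACG Γ)), wf Γ v (m • e) n = 0 := by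
      intro n hn
      induction hn using Subgroup.closure_induction with
      | mem t ht => exact fun m hm => he' m hm t ht
      | one => exact fun m _ => wf_one _ _ _
      | mul x y hx' hy' hx hy =>
        intro m hm
        rw [wf_mul, hx m hm, smul_smul, hy _ (mul_mem (inv_mem hx') hm), add_zero]
      | inv x hx' hx =>
        intro m hm
        rw [wf_inv, smul_smul, hx _ (mul_mem hx' hm)]
    intro n hn
    simpa using key n hn 1 (one_mem _)

theorem exists_word (x : RACG Γ) : ∃ l : List V, (l.map (gen Γ)).prod = x := by
  induction x using racg_induction Γ with
  | one => exact ⟨[], rfl⟩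
  | step x s ih =>
    obtain ⟨l, rfl⟩ := ih
    exact ⟨l ++ [s], by simp⟩

theorem exists_cross {v : V} (l : List V) : ∀ (e : RACG Γ ⧸ starSub Γ v),
    wf Γ v e (l.map (gen Γ)).prod ≠ 0 →
    ∃ l₁ l₂, l = l₁ ++ v :: l₂ ∧ (l₁.map (gen Γ)).prod • base Γ v = e := by
  induction l with
  | nil => intro e he; simp [wf_one] at he
  | cons s l ih =>
    intro e he
    by_cases hs : s = v ∧ e = base Γ v
    · obtain ⟨rfl, rfl⟩ := hs
      exact ⟨[], l, rfl, by simp⟩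
    · rw [List.map_cons, List.prod_cons, wf_mul, wf_gen, if_neg hs, zero_add] at he
      obtain ⟨l₁, l₂, rfl, h⟩ := ih _ he
      refine ⟨s :: l₁, l₂, rfl, ?_⟩
      rw [List.map_cons, List.prod_cons, mul_smul, h, smul_inv_smul]

/-- An element crossing no wall is trivial. -/
theorem eq_one_of_wf (x : RACG Γ) (hx : ∀ v e, wf Γ v e x = 0) : x = 1 := by
  obtain ⟨l, hl⟩ := exists_word Γ x
  induction hk : l.length using Nat.strong_induction_on generalizing l with
  | _ k ih =>
    cases l with
    | nil => simpa using hl.symm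
    | cons s l =>
      have h1 := hx s (base Γ s)
      rw [← hl, List.map_cons, List.prod_cons, wf_mul, wf_gen, if_pos ⟨rfl, rfl⟩, gen_inv,
        (smul_eq_base Γ (gen_mem_star Γ s) _).2 rfl] at h1
      have h2 : wf Γ s (base Γ s) (l.map (gen Γ)).prod ≠ 0 := by
        intro h
        rw [h] at h1
        exact absurd h1 (by decide)
      obtain ⟨l₁, l₂, rfl, h3⟩ := exists_cross Γ l _ h2
      have h4 : (l₁.map (gen Γ)).prod ∈ starSub Γ s := by
        have := (smul_base_iff Γ (z := 1)).1 (h3.trans (one_smul _ _).symm)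
        simpa using this
      have h5 := star_comm Γ h4
      refine ih (l₁ ++ l₂).length ?_ (l₁ ++ l₂) ?_ rfl
      · simp only [List.length_append, List.length_cons] at hk ⊢
        omega
      · rw [← hl]
        simp only [List.map_append, List.prod_append, List.map_cons, List.prod_cons]
        rw [← mul_assoc, ← mul_assoc, ← h5, mul_assoc _ (gen Γ s) (gen Γ s), gen_mul_self,
          mul_one]

/-- Propagation of containment in star subgroups along the complement graph. -/
theorem le_star_step (N : Subgroup (RACG Γ)) [N.Normal] {v w : V} (h : N ≤ starSub Γ v)
    (hvw : Γᶜ.Adj v w) : N ≤ starSub Γ w := by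
  rw [SimpleGraph.compl_adj] at hvw
  have hw : w ∉ starSet Γ v := by
    rintro (h | h)
    · exact hvw.1 h.symm
    · exact hvw.2 h
  have := fixes_of_not_cross Γ N (base Γ w) (fun n hn => wf_of_not_mem Γ hw (h hn) _)
  intro n hn
  have h1 := this n hn
  have := (smul_base_iff Γ (y := 1) (z := n)).1 (by rw [h1, one_smul])
  simpa using this

theorem le_star_reach (N : Subgroup (RACG Γ)) [N.Normal] {v w : V} (h : N ≤ starSub Γ v)
    (hvw : Γᶜ.Reachable v w) : N ≤ starSub Γ w := by
  obtain ⟨p⟩ := hvw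
  induction p with
  | nil => exact h
  | cons hadj p ih => exact ih (le_star_step Γ N h hadj)

/-- The join decomposition into components of the complement graph. -/
theorem exists_join [Fintype V] (v : V) : ∃ (k : ℕ) (P : Fin k → Set V) (i : Fin k),
    IsJoinDecomposition Γ P ∧ P i = {w | Γᶜ.Reachable v w} := by
  let eqv := (Finite.equivFin Γᶜ.ConnectedComponent)
  refine ⟨_, fun i => (eqv.symm i).supp, eqv (Γᶜ.connectedComponentMk v), ⟨?_, ?_, ?_, ?_⟩, ?_⟩
  · exact fun i => (eqv.symm i).nonempty_supp
  · intro w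
    refine ⟨eqv (Γᶜ.connectedComponentMk w), by simp, ?_⟩
    intro j hj
    rw [SimpleGraph.ConnectedComponent.mem_supp_iff] at hj
    rw [hj, Equiv.apply_symm_apply]
  · intro i j hij a ha b hb
    rw [SimpleGraph.ConnectedComponent.mem_supp_iff] at ha hb
    by_contra hc
    apply hij
    apply eqv.symm.injective
    rw [← ha, ← hb, SimpleGraph.ConnectedComponent.eq]
    by_cases hab : a = b
    · rw [hab]
    · exact ((SimpleGraph.compl_adj _ _ _).2 ⟨hab, hc⟩).reachable
  · rintro i ⟨A, B, ⟨a, ha⟩, ⟨b, hb⟩, hdisj, hun, hadj⟩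
    change A ∪ B = (eqv.symm i).supp at hun
    have hA : ∀ x y, Γᶜ.Adj x y → x ∈ A → y ∈ A := by
      intro x y hxy hx
      have h1 : x ∈ (eqv.symm i).supp := by rw [← hun]; exact Or.inl hx
      have h2 : y ∈ (eqv.symm i).supp := by
        rw [SimpleGraph.ConnectedComponent.mem_supp_iff] at h1 ⊢
        rw [← h1, SimpleGraph.ConnectedComponent.eq]
        exact hxy.symm.reachable
      rw [← hun] at h2
      rcases h2 with h2 | h2
      · exact h2
      · exact absurd (hadj x hx y h2) ((SimpleGraph.compl_adj _ _ _).1 hxy).2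
    have hr : Γᶜ.Reachable a b := by
      have h1 : a ∈ (eqv.symm i).supp := by rw [← hun]; exact Or.inl ha
      have h2 : b ∈ (eqv.symm i).supp := by rw [← hun]; exact Or.inr hb
      rw [SimpleGraph.ConnectedComponent.mem_supp_iff] at h1 h2
      exact SimpleGraph.ConnectedComponent.eq.1 (h1.trans h2.symm)
    have hb' : b ∈ A := by
      obtain ⟨p⟩ := hr
      clear hb
      induction p with
      | nil => exact ha
      | cons h p ih => exact ih (hA _ _ h ha)
    exact Set.disjoint_left.1 hdisj hb' hb
  · ext w
    simp only [Equiv.symm_apply_apply, SimpleGraph.ConnectedComponent.mem_supp_iff,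
      SimpleGraph.ConnectedComponent.eq, Set.mem_ofPred_eq]
    exact ⟨fun h => h.symm, fun h => h.symm⟩

theorem not_le_star [Fintype V] (N : Subgroup (RACG Γ)) [N.Normal] (hfull : IsFullSubgroup Γ N)
    {v w : V} (hvw : Γᶜ.Adj v w) : ¬ N ≤ starSub Γ v := by
  intro hle
  obtain ⟨k, P, i, hP, hPi⟩ := exists_join Γ v
  apply hfull k P hP i
  rw [eq_bot_iff]
  rintro n ⟨hn, hni⟩
  rw [Subgroup.mem_bot]
  apply eq_one_of_wf Γ n
  intro s e
  rw [hPi] at hni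
  by_cases hs : Γᶜ.Reachable v s
  · -- there is a neighbour `t` of `s` in the complement
    obtain ⟨t, ht⟩ : ∃ t, Γᶜ.Adj s t := by
      by_cases hsv : s = v
      · exact ⟨w, hsv ▸ hvw⟩
      · obtain ⟨p⟩ := hs.symm
        cases p with
        | nil => exact absurd rfl hsv
        | cons h _ => exact ⟨_, h⟩
    have h1 := le_star_reach Γ N hle (hs.trans ht.reachable)
    refine wf_of_not_mem Γ ?_ (h1 hn) e
    rw [SimpleGraph.compl_adj] at ht
    rintro (h | h)
    · exact ht.1 h
    · exact ht.2 h.symm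
  · exact wf_of_not_mem Γ (S := {w | Γᶜ.Reachable v w}) hs hni e

theorem centralizer_finiteIndex [Fintype V] (N : Subgroup (RACG Γ)) [N.Normal] (hfg : N.FG)
    (hfull : IsFullSubgroup Γ N) (v : V) :
    (Subgroup.centralizer {((gen Γ v : RACG Γ) : RACG Γ ⧸ N)}).FiniteIndex := by
  have hle : (starSub Γ v).map (QuotientGroup.mk' N) ≤
      Subgroup.centralizer {((gen Γ v : RACG Γ) : RACG Γ ⧸ N)} := by
    rintro _ ⟨h, hh, rfl⟩
    rw [Subgroup.mem_centralizer_singleton_iff]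
    exact congrArg (QuotientGroup.mk' N) (star_comm Γ hh)
  suffices h : ((starSub Γ v).map (QuotientGroup.mk' N)).FiniteIndex from
    Subgroup.finiteIndex_of_le hle
  suffices h : (starSub Γ v ⊔ N).FiniteIndex by
    constructor
    rw [← Subgroup.index_comap_of_surjective _ (QuotientGroup.mk'_surjective N),
      Subgroup.comap_map_eq, QuotientGroup.ker_mk']
    exact h.index_ne_zero
  by_cases hv : ∃ w, Γᶜ.Adj v w
  · obtain ⟨w, hw⟩ := hv
    rcases fg_dichotomy Γ v N hfg with ⟨F, hF, hcov⟩ | ⟨e, he⟩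
    · have hfin : Finite (RACG Γ ⧸ (starSub Γ v ⊔ N)) := by
        let φ : RACG Γ ⧸ starSub Γ v → RACG Γ ⧸ (starSub Γ v ⊔ N) :=
          Subgroup.quotientMapOfLE le_sup_left
        refine Set.finite_univ_iff.1 ((hF.image φ).subset ?_)
        intro q _
        obtain ⟨x, rfl⟩ := QuotientGroup.mk_surjective q
        obtain ⟨n, hn, hnF⟩ := hcov (x : RACG Γ ⧸ starSub Γ v)
        refine ⟨_, hnF, ?_⟩
        change ((n * x : RACG Γ) : RACG Γ ⧸ (starSub Γ v ⊔ N)) = _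
        refine QuotientGroup.eq.2 (Subgroup.mem_sup_right ?_)
        have := Subgroup.Normal.conj_mem ‹N.Normal› n⁻¹ (inv_mem hn) x⁻¹
        convert this using 1
        group
      exact Subgroup.finiteIndex_of_finite_quotient
    · exfalso
      apply not_le_star Γ N hfull hw
      have hfix := fixes_of_not_cross Γ N e he
      obtain ⟨u, hu⟩ := QuotientGroup.mk_surjective e
      intro n hn
      have h1 := hfix _ (Subgroup.Normal.conj_mem ‹N.Normal› n hn u)
      rw [← hu] at h1
      have h2 := QuotientGroup.eq.1 h1.symm
      convert h2 using 1
      simp only [smul_eq_mul]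
      group
  · have htop : starSub Γ v = ⊤ := by
      have : starSet Γ v = Set.univ := by
        ext w
        simp only [Set.mem_univ, iff_true]
        by_contra hc
        apply hv
        refine ⟨w, (SimpleGraph.compl_adj _ _ _).2 ⟨?_, ?_⟩⟩
        · rintro rfl; exact hc (Or.inl rfl)
        · exact fun h => hc (Or.inr h)
      rw [eq_top_iff]
      intro x _
      induction x using racg_induction Γ with
      | one => exact one_mem _
      | step x s ih => exact mul_mem (ih trivial) (gen_mem Γ (by rw [this]; trivial))
    rw [htop, top_sup_eq]
    infer_instance

theorem center_finiteIndex [Fintype V] (N : Subgroup (RACG Γ)) [N.Normal] (hfg : N.FG)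
    (hfull : IsFullSubgroup Γ N) : (Subgroup.center (RACG Γ ⧸ N)).FiniteIndex := by
  have h : (⨅ v : V, Subgroup.centralizer {((gen Γ v : RACG Γ) : RACG Γ ⧸ N)}).FiniteIndex :=
    Subgroup.finiteIndex_iInf (fun v => centralizer_finiteIndex Γ N hfg hfull v)
  refine @Subgroup.finiteIndex_of_le _ _ _ _ h ?_
  intro z hz
  rw [Subgroup.mem_center_iff]
  intro q
  obtain ⟨x, rfl⟩ := QuotientGroup.mk_surjective q
  induction x using racg_induction Γ with
  | one => simp
  | step x s ih =>
    have h1 := Subgroup.mem_centralizer_singleton_iff.1 ((Subgroup.mem_iInf.1 hz) s)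
    rw [QuotientGroup.mk_mul, mul_assoc, ← h1, ← mul_assoc, ih, mul_assoc]

theorem finite_by_abelian_of_center {Q : Type} [Group Q] (h : (Subgroup.center Q).FiniteIndex) :
    FiniteByAbelian Q := by
  have hfin : Finite (commutatorSet Q) := by
    let φ : (Q ⧸ Subgroup.center Q) × (Q ⧸ Subgroup.center Q) → Q :=
      fun p => p.1.out * p.2.out * p.1.out⁻¹ * p.2.out⁻¹
    refine Set.Finite.to_subtype ((Set.finite_range φ).subset ?_)
    rintro _ ⟨x, y, rfl⟩
    refine ⟨((x : Q ⧸ Subgroup.center Q), (y : Q ⧸ Subgroup.center Q)), ?_⟩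
    obtain ⟨a, ha⟩ := QuotientGroup.mk_out_eq_mul (Subgroup.center Q) x
    obtain ⟨b, hb⟩ := QuotientGroup.mk_out_eq_mul (Subgroup.center Q) y
    have ha' := Subgroup.mem_center_iff.1 a.2
    have hb' := Subgroup.mem_center_iff.1 b.2
    simp only [φ, ha, hb, commutatorElement_def]
    generalize (a : Q) = a at *
    generalize (b : Q) = b at *
    calc x * a * (y * b) * (x * a)⁻¹ * (y * b)⁻¹
        = x * (a * y) * b * a⁻¹ * x⁻¹ * b⁻¹ * y⁻¹ := by group
      _ = x * y * (a * b) * a⁻¹ * x⁻¹ * b⁻¹ * y⁻¹ := by rw [← ha']; group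
      _ = x * y * (b * x⁻¹) * b⁻¹ * y⁻¹ := by rw [hb' a]; group
      _ = x * y * x⁻¹ * y⁻¹ := by rw [← hb']; group
  refine ⟨_root_.commutator Q, inferInstance, inferInstance, ?_⟩
  intro x y
  rw [← commutatorElement_def]
  exact Subgroup.commutator_mem_commutator (Subgroup.mem_top x) (Subgroup.mem_top y)

end Helpers

theorem quotient_of_RACG_by_fg_full_normal_subgroup
    {V : Type} [Fintype V] (Γ : SimpleGraph V)
    (N : Subgroup (RACG Γ)) [N.Normal]
    (hfg : N.FG) (hfull : IsFullSubgroup Γ N) :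
    AbelianByFinite (RACG Γ ⧸ N) ∧ FiniteByAbelian (RACG Γ ⧸ N) := by
  have hc := center_finiteIndex Γ N hfg hfull
  refine ⟨⟨Subgroup.center _, inferInstance, hc, ?_⟩, finite_by_abelian_of_center hc⟩
  intro x y
  exact Subtype.ext (Subgroup.mem_center_iff.1 y.2 x)
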